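/- Let A>0 and B∈ℝ with A+B<0, and let (x_n)_{n≥n₀} be the unique zeros of ζ_n in (0,1) (which exist for all sufficiently large n). Then, as n→∞, x_n=1−κ/n+c_κ/n²+o(1/n²), where κ=−2(A+B)/A and c_κ=κ²−2+2∫₀^∞ e^{−κτ}(1+τ)^{−2}dτ. -/

import Mathlib

open MeasureTheory Real Set Filter Asymptotics

/-- Rising factorial (Pochhammer symbol) `(a)_k`. -/
noncomputable def poch (a : ℝ) (k : ℕ) : ℝ := (ascPochhammer ℝ k).eval a

/-- Gauss hypergeometric function `F(a,b;c;x)`: given by Euler's integral representation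
when `c > b > 0` (valid for all `x ∈ (-∞,1]`), and by the defining power series otherwise. -/
noncomputable def hyper (a b c x : ℝ) : ℝ :=
  if b < c ∧ 0 < b then
    Real.Gamma c / (Real.Gamma b * Real.Gamma (c - b)) *
      ∫ t in (0:ℝ)..1, t ^ (b - 1) * (1 - t) ^ (c - b - 1) * (1 - x * t) ^ (-a)
  else
    ∑' k : ℕ, poch a k * poch b k / (poch c k * (Nat.factorial k)) * x ^ k

/-- The coefficient `a_t = (t - √(t²+8))/2`. -/
noncomputable def aCoef (t : ℝ) : ℝ := (t - Real.sqrt (t ^ 2 + 8)) / 2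

/-- The coefficient `b_t = (t + √(t²+8))/2`. -/
noncomputable def bCoef (t : ℝ) : ℝ := (t + Real.sqrt (t ^ 2 + 8)) / 2

/-- `F_t(x) = F(a_t, b_t; t+1; x)`. -/
noncomputable def Fhyp (t x : ℝ) : ℝ := hyper (aCoef t) (bCoef t) (t + 1) x

/-- The dispersion function `ζ_n` associated with the quadratic profile `f₀(r) = Ar² + B`. -/
noncomputable def zetaDisp (A B : ℝ) (n : ℕ) (x : ℝ) : ℝ :=
  Fhyp n x * (1 - x + (A + 2 * B) / (A * ((n : ℝ) + 1)) * x)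
    + ∫ τ in (0:ℝ)..1, Fhyp n (τ * x) * τ ^ n * (-1 + 2 * x * τ)

/-- `κ = -2(A+B)/A`. -/
noncomputable def kap (A B : ℝ) : ℝ := -2 * (A + B) / A

/-- `c_κ = κ² - 2 + 2∫₀^∞ e^{-κτ}(1+τ)^{-2} dτ`. -/
noncomputable def ckap (A B : ℝ) : ℝ :=
  kap A B ^ 2 - 2 + 2 * ∫ τ in Set.Ioi (0:ℝ), Real.exp (-kap A B * τ) / (1 + τ) ^ 2

/-! Substituting `t = exp (-v / n)` in Euler's integral turns `F_n`, up to a constant factor, into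
an integral mean `H` that tends to `1`. In the integral term of `ζ_n`, replace `H (τ x)` by `H x`,
with an error `D`: the equation `ζ_n x = 0` becomes affine in `1 - x`, perturbed by `D / H x`.
Monotonicity of `H` gives `n D → 0`, hence `n (1 - x_n) → κ`. With this first-order information,
and `τ = exp (-u / n)`, dominated convergence gives
`n² D → 2 ∬ exp (-u - v) log (1 + u / (κ + v)) du dv = 2 ∫ exp (-κ σ) / (1 + σ)² dσ`,
which determines the coefficient of `1 / n²`. -/

open Topology

section RpowLimits

theorem tendsto_zero_of_natCast_mul_tendsto {z : ℕ → ℝ} {m : ℝ}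
    (h : Tendsto (fun n : ℕ => n * z n) atTop (𝓝 m)) : Tendsto z atTop (𝓝 0) := by
  have hinv : Tendsto (fun n : ℕ => (n : ℝ)⁻¹) atTop (𝓝 0) := tendsto_inv_atTop_nhds_zero_nat
  have hprod := hinv.mul h
  rw [zero_mul] at hprod
  refine hprod.congr' ?_
  filter_upwards [eventually_ne_atTop 0] with n hn
  field_simp

theorem tendsto_natCast_mul_exp_sub_one {z : ℕ → ℝ} {m : ℝ}
    (h : Tendsto (fun n : ℕ => n * z n) atTop (𝓝 m)) :
    Tendsto (fun n : ℕ => n * (exp (z n) - 1)) atTop (𝓝 m) := by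
  have hlim := (Real.hasDerivAt_exp 0).hasFDerivAt.hasFDerivWithinAt.lim
    (s := univ) (tendsto_zero_of_natCast_mul_tendsto h) (by simp) (by simpa using h)
  simpa using hlim

theorem tendsto_natCast_mul_one_sub_exp_neg_div (v : ℝ) :
    Tendsto (fun n : ℕ => n * (1 - exp (-v / n))) atTop (𝓝 v) := by
  have hlin : Tendsto (fun n : ℕ => n * (-v / n)) atTop (𝓝 (-v)) := by
    refine tendsto_const_nhds.congr' ?_
    filter_upwards [eventually_ne_atTop 0] with n hn
    field_simp
  simpa only [neg_neg, ← mul_neg, neg_sub] using (tendsto_natCast_mul_exp_sub_one hlin).neg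

theorem tendsto_natCast_mul_exp_div_sub_one (v : ℝ) :
    Tendsto (fun n : ℕ => n * (exp (v / n) - 1)) atTop (𝓝 v) := by
  refine tendsto_natCast_mul_exp_sub_one (tendsto_const_nhds.congr' ?_)
  filter_upwards [eventually_ne_atTop 0] with n hn
  field_simp

theorem tendsto_exp_neg_div_natCast (v : ℝ) :
    Tendsto (fun n : ℕ => exp (-v / n)) atTop (𝓝 1) := by
  simpa using
    (tendsto_zero_of_natCast_mul_tendsto (tendsto_natCast_mul_one_sub_exp_neg_div v)).const_sub 1

variable {e : ℕ → ℝ} {c : ℝ}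

theorem tendsto_natCast_rpow_one (he : Tendsto (fun n : ℕ => n * e n) atTop (𝓝 c)) :
    Tendsto (fun n : ℕ => (n : ℝ) ^ e n) atTop (𝓝 1) := by
  have hroot := (tendsto_rpow_div.comp tendsto_natCast_atTop_atTop).rpow he (.inl one_ne_zero)
  rw [one_rpow] at hroot
  refine hroot.congr' ?_
  filter_upwards [eventually_ne_atTop 0] with n hn
  rw [Function.comp_apply, ← rpow_mul n.cast_nonneg]
  congr 1
  field_simp

theorem tendsto_rpow_one_of_natCast_mul_tendsto (he : Tendsto (fun n : ℕ => n * e n) atTop (𝓝 c))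
    {p : ℕ → ℝ} {l : ℝ} (hl : 0 < l) (hp : Tendsto (fun n : ℕ => n * p n) atTop (𝓝 l)) :
    Tendsto (fun n : ℕ => p n ^ e n) atTop (𝓝 1) := by
  have hquot := (hp.rpow (tendsto_zero_of_natCast_mul_tendsto he) (.inl hl.ne')).div
    (tendsto_natCast_rpow_one he) one_ne_zero
  rw [rpow_zero, div_one] at hquot
  refine hquot.congr' ?_
  filter_upwards [eventually_gt_atTop 0, hp.eventually_const_lt hl] with n hn hnp
  have hn' : (0 : ℝ) < n := Nat.cast_pos.2 hn
  rw [Pi.div_apply, mul_rpow hn'.le (pos_of_mul_pos_right hnp hn'.le).le]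
  field_simp

theorem tendsto_natCast_mul_rpow_sub_one (he : Tendsto (fun n : ℕ => n * e n) atTop (𝓝 c))
    {r : ℕ → ℝ} {l : ℝ} (hl : 0 < l) (hr : Tendsto r atTop (𝓝 l)) :
    Tendsto (fun n : ℕ => n * (r n ^ e n - 1)) atTop (𝓝 (c * log l)) := by
  have hlog : Tendsto (fun n : ℕ => n * (log (r n) * e n)) atTop (𝓝 (c * log l)) :=
    (he.mul (hr.log hl.ne')).congr fun n => by ring
  refine (tendsto_natCast_mul_exp_sub_one hlog).congr' ?_
  filter_upwards [hr.eventually_const_lt hl] with n hn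
  rw [rpow_def_of_pos hn]

end RpowLimits

section ExponentialIntegrals

theorem integrableOn_exp_neg_mul_self : IntegrableOn (fun u : ℝ => exp (-u) * u) (Ioi 0) := by
  simpa [show (2 : ℝ) - 1 = 1 by norm_num] using Real.GammaIntegral_convergent (s := 2) two_pos

theorem integrableOn_quadrant_mul {f g : ℝ → ℝ} (hf : IntegrableOn f (Ioi 0))
    (hg : IntegrableOn g (Ioi 0)) :
    IntegrableOn (fun p : ℝ × ℝ => f p.1 * g p.2) (Ioi 0 ×ˢ Ioi 0) := by
  rw [IntegrableOn, Measure.volume_eq_prod, ← Measure.prod_restrict]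
  exact hf.mul_prod hg

theorem log_one_add_div_nonneg {a u : ℝ} (ha : 0 < a) (hu : 0 ≤ u) : 0 ≤ log (1 + u / a) :=
  log_nonneg (le_add_of_nonneg_right (by positivity))

theorem log_one_add_div_le {a u : ℝ} (ha : 0 < a) (hu : 0 ≤ u) : log (1 + u / a) ≤ u / a := by
  simpa using log_le_sub_one_of_pos (show 0 < 1 + u / a by positivity)

theorem integrableOn_exp_neg_mul_log {a : ℝ} (ha : 0 < a) :
    IntegrableOn (fun u => exp (-u) * log (1 + u / a)) (Ioi 0) := by
  refine (integrableOn_exp_neg_mul_self.mul_const a⁻¹).mono' (by fun_prop) ?_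
  filter_upwards [ae_restrict_mem measurableSet_Ioi] with u (hu : 0 < u)
  rw [norm_of_nonneg (mul_nonneg (exp_pos _).le (log_one_add_div_nonneg ha hu.le)), mul_assoc]
  exact mul_le_mul_of_nonneg_left (log_one_add_div_le ha hu.le) (exp_pos _).le

theorem integrableOn_exp_neg_div_add {a : ℝ} (ha : 0 < a) :
    IntegrableOn (fun u => exp (-u) / (a + u)) (Ioi 0) := by
  have hmeas : Measurable fun u : ℝ => exp (-u) / (a + u) := by fun_prop
  refine ((integrableOn_exp_neg_Ioi 0).div_const a).mono' hmeas.aestronglyMeasurable ?_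
  filter_upwards [ae_restrict_mem measurableSet_Ioi] with u (hu : 0 < u)
  rw [norm_of_nonneg (by positivity)]
  gcongr
  linarith

theorem tendsto_exp_neg_mul_log_atTop {a : ℝ} (ha : 0 < a) :
    Tendsto (fun u => exp (-u) * log (1 + u / a)) atTop (𝓝 0) := by
  have hmaj : Tendsto (fun u : ℝ => u * exp (-u) / a) atTop (𝓝 0) := by
    simpa using (Real.tendsto_pow_mul_exp_neg_atTop_nhds_zero 1).div_const a
  refine squeeze_zero' ?_ ?_ hmaj
  · filter_upwards [eventually_ge_atTop 0] with u hu
    exact mul_nonneg (exp_pos _).le (log_one_add_div_nonneg ha hu)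
  · filter_upwards [eventually_ge_atTop 0] with u hu
    rw [mul_comm u, mul_div_assoc]
    exact mul_le_mul_of_nonneg_left (log_one_add_div_le ha hu) (exp_pos _).le

-- Integration by parts: the boundary terms of `exp (-u) * log (1 + u / a)` vanish at `0` and `∞`.
theorem integral_exp_neg_mul_log_eq_integral_div {a : ℝ} (ha : 0 < a) :
    ∫ u in Ioi (0 : ℝ), exp (-u) * log (1 + u / a) = ∫ u in Ioi (0 : ℝ), exp (-u) / (a + u) := by
  have hderiv : ∀ u ∈ Ici (0 : ℝ), HasDerivAt (fun u => -(exp (-u) * log (1 + u / a)))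
      (exp (-u) * log (1 + u / a) - exp (-u) / (a + u)) u := by
    intro u (hu : 0 ≤ u)
    have hexp : HasDerivAt (fun u : ℝ => exp (-u)) (-exp (-u)) u := by
      simpa using (hasDerivAt_neg u).exp
    have hlog : HasDerivAt (fun u : ℝ => log (1 + u / a)) (1 / a / (1 + u / a)) u :=
      (((hasDerivAt_id u).div_const a).const_add 1).log (by positivity)
    refine (hexp.mul hlog).neg.congr_deriv ?_
    field_simp
    ring
  have hlog := integrableOn_exp_neg_mul_log ha
  have hdiv := integrableOn_exp_neg_div_add ha
  have hzero := integral_Ioi_of_hasDerivAt_of_tendsto' hderiv (hlog.sub hdiv)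
    (tendsto_exp_neg_mul_log_atTop ha).neg
  rw [integral_sub hlog hdiv] at hzero
  simpa [sub_eq_zero] using hzero

theorem integral_exp_neg_mul_log {a : ℝ} (ha : 0 < a) :
    ∫ u in Ioi (0 : ℝ), exp (-u) * log (1 + u / a)
      = ∫ σ in Ioi (0 : ℝ), exp (-a * σ) / (1 + σ) := by
  have hscale := integral_comp_mul_left_Ioi' (fun u => exp (-u) / (a + u)) 0 ha
  rw [mul_zero] at hscale
  rw [integral_exp_neg_mul_log_eq_integral_div ha, ← hscale, smul_eq_mul, ← integral_const_mul]
  refine setIntegral_congr_fun measurableSet_Ioi fun σ (hσ : 0 < σ) => ?_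
  simp only [neg_mul]
  field_simp

theorem integrableOn_exp_neg_mul_log_quadrant {k : ℝ} (hk : 0 < k) :
    IntegrableOn (fun p : ℝ × ℝ => exp (-p.1) * (exp (-p.2) * log (1 + p.1 / (k + p.2))))
      (Ioi 0 ×ˢ Ioi 0) := by
  refine (integrableOn_quadrant_mul (integrableOn_exp_neg_mul_self.mul_const k⁻¹)
    (integrableOn_exp_neg_Ioi 0)).mono' (by fun_prop) ?_
  filter_upwards [ae_restrict_mem (measurableSet_Ioi.prod measurableSet_Ioi)]
    with ⟨u, v⟩ ⟨(hu : 0 < u), (hv : 0 < v)⟩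
  have hkv : 0 < k + v := by positivity
  have hlog := log_one_add_div_nonneg hkv hu.le
  rw [norm_of_nonneg (by positivity)]
  calc exp (-u) * (exp (-v) * log (1 + u / (k + v)))
      ≤ exp (-u) * (exp (-v) * (u / k)) := by
        gcongr
        exact (log_one_add_div_le hkv hu.le).trans (by gcongr; linarith)
    _ = exp (-u) * u * k⁻¹ * exp (-v) := by ring

theorem integral_exp_neg_mul_exp_neg_mul {k σ : ℝ} (hσ : 0 < σ) :
    ∫ v in Ioi (0 : ℝ), exp (-v) * (exp (-(k + v) * σ) / (1 + σ))
      = exp (-k * σ) / (1 + σ) ^ 2 := by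
  have hsplit : ∀ v, exp (-v) * (exp (-(k + v) * σ) / (1 + σ))
      = exp (-k * σ) / (1 + σ) * exp (-(1 + σ) * v) := by
    intro v
    have hexp : exp (-v) * exp (-(k + v) * σ) = exp (-k * σ) * exp (-(1 + σ) * v) := by
      rw [← exp_add, ← exp_add]
      ring_nf
    rw [← mul_div_assoc, hexp]
    ring
  simp_rw [hsplit]
  rw [integral_const_mul, integral_exp_mul_Ioi (by linarith), mul_zero, exp_zero,
    neg_div_neg_eq]
  field_simp

theorem integrableOn_exp_neg_mul_exp_neg_mul {k : ℝ} (hk : 0 < k) :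
    IntegrableOn (fun p : ℝ × ℝ => exp (-p.1) * (exp (-(k + p.1) * p.2) / (1 + p.2)))
      (Ioi 0 ×ˢ Ioi 0) := by
  refine (integrableOn_quadrant_mul (integrableOn_exp_neg_Ioi 0)
    (integrableOn_exp_mul_Ioi (neg_lt_zero.2 hk) 0)).mono' (by fun_prop) ?_
  filter_upwards [ae_restrict_mem (measurableSet_Ioi.prod measurableSet_Ioi)]
    with ⟨v, σ⟩ ⟨(hv : 0 < v), (hσ : 0 < σ)⟩
  rw [norm_of_nonneg (by positivity)]
  gcongr
  refine (div_le_self (exp_pos _).le (by linarith)).trans (exp_le_exp.2 ?_)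
  nlinarith [mul_pos hv hσ]

theorem integral_exp_neg_mul_log_quadrant {k : ℝ} (hk : 0 < k) :
    ∫ p in Ioi (0 : ℝ) ×ˢ Ioi (0 : ℝ), exp (-p.1) * (exp (-p.2) * log (1 + p.1 / (k + p.2)))
      = ∫ σ in Ioi (0 : ℝ), exp (-k * σ) / (1 + σ) ^ 2 := by
  have hlog := integrableOn_exp_neg_mul_log_quadrant hk
  have hexp := integrableOn_exp_neg_mul_exp_neg_mul hk
  rw [IntegrableOn, Measure.volume_eq_prod, ← Measure.prod_restrict] at hlog hexp
  rw [Measure.volume_eq_prod, ← Measure.prod_restrict, integral_prod_symm _ hlog]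
  calc ∫ v in Ioi (0 : ℝ), ∫ u in Ioi (0 : ℝ), exp (-u) * (exp (-v) * log (1 + u / (k + v)))
      = ∫ v in Ioi (0 : ℝ), ∫ σ in Ioi (0 : ℝ), exp (-v) * (exp (-(k + v) * σ) / (1 + σ)) := by
        refine setIntegral_congr_fun measurableSet_Ioi fun v (hv : 0 < v) => ?_
        simp only [mul_left_comm _ (exp (-v))]
        rw [integral_const_mul, integral_const_mul, integral_exp_neg_mul_log (by positivity)]
    _ = ∫ σ in Ioi (0 : ℝ), ∫ v in Ioi (0 : ℝ), exp (-v) * (exp (-(k + v) * σ) / (1 + σ)) :=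
        integral_integral_swap hexp
    _ = ∫ σ in Ioi (0 : ℝ), exp (-k * σ) / (1 + σ) ^ 2 :=
        setIntegral_congr_fun measurableSet_Ioi fun σ hσ => integral_exp_neg_mul_exp_neg_mul hσ

end ExponentialIntegrals

section Coefficients

theorem aCoef_neg (t : ℝ) : aCoef t < 0 := by
  have hroot : t < √(t ^ 2 + 8) := lt_sqrt_of_sq_lt (by linarith)
  rw [aCoef]
  linarith

theorem neg_one_lt_aCoef {t : ℝ} (ht : 1 < t) : -1 < aCoef t := by
  have hroot : √(t ^ 2 + 8) < t + 2 := (sqrt_lt' (by linarith)).2 (by nlinarith)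
  rw [aCoef]
  linarith

theorem bCoef_eq_sub_aCoef (t : ℝ) : bCoef t = t - aCoef t := by
  rw [aCoef, bCoef]
  ring

theorem mul_neg_aCoef (t : ℝ) : t * -aCoef t = 2 - aCoef t ^ 2 := by
  have hsq : √(t ^ 2 + 8) ^ 2 = t ^ 2 + 8 := sq_sqrt (by positivity)
  rw [aCoef]
  linear_combination hsq / 4

theorem tendsto_aCoef_natCast : Tendsto (fun n : ℕ => aCoef n) atTop (𝓝 0) := by
  have hlower : Tendsto (fun n : ℕ => -(2 / (n : ℝ))) atTop (𝓝 0) := by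
    simpa using (tendsto_const_div_atTop_nhds_zero_nat (2 : ℝ)).neg
  refine tendsto_of_tendsto_of_tendsto_of_le_of_le' hlower tendsto_const_nhds ?_
    (.of_forall fun n => (aCoef_neg n).le)
  filter_upwards [eventually_gt_atTop 0] with n hn
  rw [neg_le, le_div_iff₀' (Nat.cast_pos.2 hn), mul_neg_aCoef]
  linarith [sq_nonneg (aCoef n)]

theorem tendsto_natCast_mul_neg_aCoef :
    Tendsto (fun n : ℕ => n * -aCoef n) atTop (𝓝 2) := by
  simpa only [mul_neg_aCoef, zero_pow two_ne_zero, sub_zero] using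
    (tendsto_aCoef_natCast.pow 2).const_sub 2

end Coefficients

section EulerKernel

theorem exp_neg_div_lt_one {N v : ℝ} (hN : 0 < N) (hv : 0 < v) : exp (-v / N) < 1 :=
  Real.exp_lt_one_iff.2 (div_neg_of_neg_of_pos (neg_lt_zero.2 hv) hN)

theorem image_exp_neg_div_Ioi {N : ℝ} (hN : 0 < N) :
    (fun v => exp (-v / N)) '' Ioi 0 = Ioo 0 1 := by
  ext t
  constructor
  · rintro ⟨v, hv, rfl⟩
    exact ⟨exp_pos _, exp_neg_div_lt_one hN hv⟩
  · rintro ⟨ht0, ht1⟩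
    refine ⟨N * -log t, mul_pos hN (neg_pos.2 (log_neg ht0 ht1)), ?_⟩
    simp only [mul_neg, neg_neg, mul_div_cancel_left₀ _ hN.ne', exp_log ht0]

theorem mul_integral_zero_one_eq_integral_exp_neg_div {N : ℝ} (hN : 0 < N) (f : ℝ → ℝ) :
    N * ∫ t in (0 : ℝ)..1, f t = ∫ v in Ioi (0 : ℝ), exp (-v / N) * f (exp (-v / N)) := by
  have hderiv : ∀ v ∈ Ioi (0 : ℝ),
      HasDerivWithinAt (fun v => exp (-v / N)) (exp (-v / N) * (-1 / N)) (Ioi 0) v :=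
    fun v _ => ((hasDerivAt_neg v).div_const N).exp.hasDerivWithinAt
  have hinj : InjOn (fun v => exp (-v / N)) (Ioi 0) := fun v _ w _ hvw =>
    neg_injective ((div_left_inj' hN.ne').1 (exp_injective hvw))
  rw [intervalIntegral.integral_of_le zero_le_one, integral_Ioc_eq_integral_Ioo,
    ← image_exp_neg_div_Ioi hN,
    integral_image_eq_integral_abs_deriv_smul measurableSet_Ioi hderiv hinj, ← integral_const_mul]
  refine setIntegral_congr_fun measurableSet_Ioi fun v _ => ?_
  simp only [smul_eq_mul, abs_mul, abs_exp, abs_div, abs_neg, abs_one, abs_of_pos hN]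
  field_simp

/-- The integrand of Euler's integral for `F(-e, N + e; N + 1; y)`, up to a constant factor, in the
variable `v` with `t = exp (-v / N)`. -/
noncomputable def eulerKernel (N e y v : ℝ) : ℝ :=
  exp (-v) * ((exp (v / N) - 1) ^ (-e) * (1 - y * exp (-v / N)) ^ e)

/-- Euler's integral for `F(-e, N + e; N + 1; y)`, up to a constant factor, normalised so that it
tends to `1` when `N → ∞` and `e = O(1 / N)`. -/
noncomputable def eulerMean (N e y : ℝ) : ℝ := ∫ v in Ioi (0 : ℝ), eulerKernel N e y v

theorem measurable_eulerKernel (N e y : ℝ) : Measurable (eulerKernel N e y) := by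
  unfold eulerKernel
  fun_prop

theorem exp_neg_div_mul_euler_integrand {N : ℝ} (e y : ℝ) {v : ℝ} (hN : 0 < N) (hv : 0 < v) :
    exp (-v / N) * (exp (-v / N) ^ (N + e - 1) * (1 - exp (-v / N)) ^ (-e)
      * (1 - y * exp (-v / N)) ^ e) = eulerKernel N e y v := by
  have hfactor : exp (v / N) - 1 = exp (v / N) * (1 - exp (-v / N)) := by
    rw [mul_sub, mul_one, neg_div, ← exp_add, add_neg_cancel, exp_zero]
  have hexp : exp (-v / N) * exp (-v / N * (N + e - 1)) = exp (-v) * exp (v / N * -e) := by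
    rw [← exp_add, ← exp_add]
    congr 1
    field_simp
    ring
  rw [eulerKernel, hfactor,
    mul_rpow (exp_pos _).le (sub_nonneg.2 (exp_neg_div_lt_one hN hv).le), ← exp_mul, ← exp_mul]
  linear_combination (1 - exp (-v / N)) ^ (-e) * (1 - y * exp (-v / N)) ^ e * hexp

theorem exists_Fhyp_eq_mul_eulerMean {t : ℝ} (ht : 1 < t) :
    ∃ C : ℝ, 0 < C ∧ ∀ y, Fhyp t y = C * eulerMean t (-aCoef t) y := by
  have ha := neg_one_lt_aCoef ht
  have ht0 : 0 < t := one_pos.trans ht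
  have hb : 0 < bCoef t := by linarith [bCoef_eq_sub_aCoef t, aCoef_neg t]
  have hbc : 0 < t + 1 - bCoef t := by linarith [bCoef_eq_sub_aCoef t]
  refine ⟨Gamma (t + 1) / (Gamma (bCoef t) * Gamma (t + 1 - bCoef t)) / t, by positivity,
    fun y => ?_⟩
  have hmean : eulerMean t (-aCoef t) y = t * ∫ s in (0 : ℝ)..1,
      s ^ (bCoef t - 1) * (1 - s) ^ (t + 1 - bCoef t - 1) * (1 - y * s) ^ (-aCoef t) := by
    have hexponent : t + 1 - bCoef t - 1 = - -aCoef t := by linarith [bCoef_eq_sub_aCoef t]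
    rw [mul_integral_zero_one_eq_integral_exp_neg_div ht0, eulerMean, hexponent,
      bCoef_eq_sub_aCoef, sub_eq_add_neg t]
    exact setIntegral_congr_fun measurableSet_Ioi fun v hv =>
      (exp_neg_div_mul_euler_integrand _ y ht0 hv).symm
  rw [Fhyp, hyper, if_pos ⟨sub_pos.1 hbc, hb⟩, hmean, ← mul_assoc, div_mul_cancel₀ _ ht0.ne']

variable {N e y v : ℝ}

theorem one_sub_mul_exp_neg_div_pos (hN : 0 < N) (hv : 0 < v) (hy : y ≤ 1) :
    0 < 1 - y * exp (-v / N) := by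
  nlinarith [exp_pos (-v / N), exp_neg_div_lt_one hN hv]

theorem one_sub_mul_exp_neg_div_le_one (hy : 0 ≤ y) : 1 - y * exp (-v / N) ≤ 1 :=
  sub_le_self _ (by positivity)

theorem eulerKernel_nonneg (hN : 0 < N) (hv : 0 < v) (hy : y ≤ 1) : 0 ≤ eulerKernel N e y v := by
  have hexp : 0 ≤ exp (v / N) - 1 := sub_nonneg.2 (one_le_exp (by positivity))
  have hbase := one_sub_mul_exp_neg_div_pos hN hv hy
  rw [eulerKernel]
  positivity

theorem eulerKernel_le (hN : 0 < N) (he : 0 ≤ e) (hv : 0 < v) (hy : y ∈ Icc 0 1) :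
    eulerKernel N e y v ≤ N ^ e * (exp (-v) * v ^ (-e)) := by
  have hexp : v / N ≤ exp (v / N) - 1 := by linarith [add_one_le_exp (v / N)]
  calc eulerKernel N e y v
      ≤ exp (-v) * ((v / N) ^ (-e) * 1) := by
        have hbase := one_sub_mul_exp_neg_div_pos hN hv hy.2
        have hleft := rpow_le_rpow_of_nonpos (by positivity) hexp (neg_nonpos.2 he)
        have hright := rpow_le_one hbase.le (one_sub_mul_exp_neg_div_le_one hy.1) he
        exact mul_le_mul_of_nonneg_left
          (mul_le_mul hleft hright (by positivity) (by positivity)) (exp_pos _).le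
    _ = N ^ e * (exp (-v) * v ^ (-e)) := by
        rw [div_rpow hv.le hN.le, rpow_neg hN.le]
        field_simp

theorem integrableOn_eulerKernel (hN : 0 < N) (he : 0 ≤ e) (he1 : e < 1) (hy : y ∈ Icc 0 1) :
    IntegrableOn (eulerKernel N e y) (Ioi 0) := by
  have hΓ := Real.GammaIntegral_convergent (sub_pos.2 he1)
  rw [show 1 - e - 1 = -e by ring] at hΓ
  refine (hΓ.const_mul (N ^ e)).mono' (measurable_eulerKernel N e y).aestronglyMeasurable ?_
  filter_upwards [ae_restrict_mem measurableSet_Ioi] with v hv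
  rw [norm_of_nonneg (eulerKernel_nonneg hN hv hy.2)]
  exact eulerKernel_le hN he hv hy

theorem eulerKernel_antitoneOn (hN : 0 < N) (he : 0 ≤ e) (hv : 0 < v) :
    AntitoneOn (fun y => eulerKernel N e y v) (Iic 1) := by
  intro y _ z hz hyz
  have hexp : 0 ≤ exp (v / N) - 1 := sub_nonneg.2 (one_le_exp (by positivity))
  have hbase := one_sub_mul_exp_neg_div_pos hN hv hz
  simp only [eulerKernel]
  gcongr

theorem eulerMean_antitoneOn (hN : 0 < N) (he : 0 ≤ e) (he1 : e < 1) :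
    AntitoneOn (eulerMean N e) (Icc 0 1) := fun _ hy _ hz hyz =>
  setIntegral_mono_on (integrableOn_eulerKernel hN he he1 hz)
    (integrableOn_eulerKernel hN he he1 hy) measurableSet_Ioi fun _ hv =>
      eulerKernel_antitoneOn hN he hv hy.2 hz.2 hyz

/-- A bound for the kernels `eulerKernel N e y`, integrable over `(0, ∞)` and independent of the
parameters as long as `e ≤ 1 / 2` and `N ^ e ≤ 2`. -/
noncomputable def eulerMajorant (v : ℝ) : ℝ :=
  2 * (exp (-v) + exp (-v) * v ^ ((1 / 2 : ℝ) - 1))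

theorem integrableOn_eulerMajorant : IntegrableOn eulerMajorant (Ioi 0) :=
  ((integrableOn_exp_neg_Ioi 0).add
    (Real.GammaIntegral_convergent (s := 1 / 2) one_half_pos)).const_mul 2

theorem eulerKernel_le_eulerMajorant (hN : 0 < N) (he : 0 ≤ e) (he_half : e ≤ 1 / 2)
    (hNe : N ^ e ≤ 2) (hv : 0 < v) (hy : y ∈ Icc 0 1) :
    eulerKernel N e y v ≤ eulerMajorant v := by
  have hpow : v ^ (-e) ≤ 1 + v ^ ((1 / 2 : ℝ) - 1) := by
    rcases le_total 1 v with hv1 | hv1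
    · linarith [rpow_le_one_of_one_le_of_nonpos hv1 (neg_nonpos.2 he),
        rpow_nonneg hv.le ((1 / 2 : ℝ) - 1)]
    · linarith [rpow_le_rpow_of_exponent_ge hv hv1 (show (1 / 2 : ℝ) - 1 ≤ -e by linarith)]
  calc eulerKernel N e y v
      ≤ N ^ e * (exp (-v) * v ^ (-e)) := eulerKernel_le hN he hv hy
    _ ≤ 2 * (exp (-v) * (1 + v ^ ((1 / 2 : ℝ) - 1))) := by gcongr
    _ = eulerMajorant v := by rw [eulerMajorant]; ring

end EulerKernel

section EulerMeanLimit

variable {e : ℕ → ℝ} {c : ℝ}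

theorem tendsto_eulerKernel (he : Tendsto (fun n : ℕ => n * e n) atTop (𝓝 c)) (hc : 0 < c)
    {y : ℕ → ℝ} (hy : ∀ᶠ n in atTop, y n ∈ Icc (0 : ℝ) 1) {v : ℝ} (hv : 0 < v) :
    Tendsto (fun n : ℕ => eulerKernel n (e n) (y n) v) atTop (𝓝 (exp (-v))) := by
  have hexp : Tendsto (fun n : ℕ => (exp (v / n) - 1) ^ (-e n)) atTop (𝓝 1) := by
    have hneg : Tendsto (fun n : ℕ => n * -e n) atTop (𝓝 (-c)) := by simpa using he.neg
    exact tendsto_rpow_one_of_natCast_mul_tendsto hneg hv (tendsto_natCast_mul_exp_div_sub_one v)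
  have hbase : Tendsto (fun n : ℕ => (1 - y n * exp (-v / n)) ^ e n) atTop (𝓝 1) := by
    refine tendsto_of_tendsto_of_tendsto_of_le_of_le'
      (tendsto_rpow_one_of_natCast_mul_tendsto he hv (tendsto_natCast_mul_one_sub_exp_neg_div v))
      tendsto_const_nhds ?_ ?_
    all_goals
      filter_upwards [eventually_gt_atTop 0, he.eventually_const_lt hc, hy] with n hn hne hyn
      have hn' : (0 : ℝ) < n := Nat.cast_pos.2 hn
      have hen : 0 ≤ e n := (pos_of_mul_pos_right hne hn'.le).le
    · refine rpow_le_rpow (sub_nonneg.2 (exp_neg_div_lt_one hn' hv).le) ?_ hen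
      exact sub_le_sub_left (mul_le_of_le_one_left (exp_pos _).le hyn.2) 1
    · exact rpow_le_one (one_sub_mul_exp_neg_div_pos hn' hv hyn.2).le
        (one_sub_mul_exp_neg_div_le_one hyn.1) hen
  simpa only [eulerKernel, mul_one] using (hexp.mul hbase).const_mul (exp (-v))

theorem eventually_mem_Ioo_half (he : Tendsto (fun n : ℕ => n * e n) atTop (𝓝 c)) (hc : 0 < c) :
    ∀ᶠ n in atTop, e n ∈ Ioo (0 : ℝ) (1 / 2) := by
  filter_upwards [he.eventually_const_lt hc,
    (tendsto_zero_of_natCast_mul_tendsto he).eventually_lt_const one_half_pos] with n hne hhalf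
  exact ⟨pos_of_mul_pos_right hne n.cast_nonneg, hhalf⟩

theorem eventually_eulerKernel_le_eulerMajorant
    (he : Tendsto (fun n : ℕ => n * e n) atTop (𝓝 c)) (hc : 0 < c) :
    ∀ᶠ n : ℕ in atTop, ∀ y ∈ Icc (0 : ℝ) 1, ∀ v ∈ Ioi (0 : ℝ),
      eulerKernel n (e n) y v ≤ eulerMajorant v := by
  filter_upwards [eventually_gt_atTop 0, eventually_mem_Ioo_half he hc,
    (tendsto_natCast_rpow_one he).eventually_le_const one_lt_two] with n hn hen hne y hy v hv
  exact eulerKernel_le_eulerMajorant (Nat.cast_pos.2 hn) hen.1.le hen.2.le hne hv hy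

theorem tendsto_eulerMean_one (he : Tendsto (fun n : ℕ => n * e n) atTop (𝓝 c)) (hc : 0 < c)
    {y : ℕ → ℝ} (hy : ∀ᶠ n in atTop, y n ∈ Icc (0 : ℝ) 1) :
    Tendsto (fun n : ℕ => eulerMean n (e n) (y n)) atTop (𝓝 1) := by
  rw [← integral_exp_neg_Ioi_zero]
  refine tendsto_integral_filter_of_dominated_convergence eulerMajorant
    (.of_forall fun n => (measurable_eulerKernel _ _ _).aestronglyMeasurable) ?_
    integrableOn_eulerMajorant ?_
  · filter_upwards [eventually_gt_atTop 0, eventually_eulerKernel_le_eulerMajorant he hc, hy]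
      with n hn hmaj hyn
    filter_upwards [ae_restrict_mem measurableSet_Ioi] with v hv
    rw [norm_of_nonneg (eulerKernel_nonneg (Nat.cast_pos.2 hn) hv hyn.2)]
    exact hmaj _ hyn v hv
  · filter_upwards [ae_restrict_mem measurableSet_Ioi] with v hv
    exact tendsto_eulerKernel he hc hy hv

end EulerMeanLimit

section EulerDefect

/-- The error made in `∫ τ in 0..1, H (τ * x) * τ ^ n * (-1 + 2 * x * τ)`, where
`H = eulerMean n e`, when `H (τ * x)` is replaced by `H x`. -/
noncomputable def eulerDefect (n : ℕ) (e x : ℝ) : ℝ :=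
  ∫ τ in (0 : ℝ)..1, (eulerMean n e (τ * x) - eulerMean n e x) * (τ ^ n * (-1 + 2 * x * τ))

variable {n : ℕ} {e x : ℝ}

theorem integral_pow_mul_affine (n : ℕ) (x : ℝ) :
    ∫ τ in (0 : ℝ)..1, τ ^ n * (-1 + 2 * x * τ) = 2 * x / (n + 2) - 1 / (n + 1) := by
  have hsplit : ∀ τ : ℝ, τ ^ n * (-1 + 2 * x * τ) = 2 * x * τ ^ (n + 1) - τ ^ n := by
    intro τ
    ring
  simp_rw [hsplit]
  rw [intervalIntegral.integral_sub (Continuous.intervalIntegrable (by fun_prop) _ _)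
    (Continuous.intervalIntegrable (by fun_prop) _ _), intervalIntegral.integral_const_mul,
    integral_pow, integral_pow]
  push_cast
  simp only [one_pow, ne_eq, Nat.add_eq_zero_iff, one_ne_zero, and_false, not_false_eq_true,
    zero_pow, sub_zero, add_assoc, one_add_one_eq_two]
  ring

theorem integral_eulerMean_mul (hn : 0 < n) (he : e ∈ Ico 0 1) (hx : x ∈ Icc (0 : ℝ) 1) :
    ∫ τ in (0 : ℝ)..1, eulerMean n e (τ * x) * (τ ^ n * (-1 + 2 * x * τ))
      = eulerDefect n e x + eulerMean n e x * (2 * x / (n + 2) - 1 / (n + 1)) := by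
  have hanti : AntitoneOn (fun τ => eulerMean n e (τ * x)) (uIcc 0 1) := by
    rw [uIcc_of_le zero_le_one]
    intro τ hτ σ hσ hτσ
    exact eulerMean_antitoneOn (Nat.cast_pos.2 hn) he.1 he.2 (unitInterval.mul_mem hτ hx)
      (unitInterval.mul_mem hσ hx) (mul_le_mul_of_nonneg_right hτσ hx.1)
  have hweight : Continuous fun τ : ℝ => τ ^ n * (-1 + 2 * x * τ) := by fun_prop
  rw [eulerDefect, ← integral_pow_mul_affine, ← intervalIntegral.integral_const_mul]
  simp_rw [sub_mul]
  rw [intervalIntegral.integral_sub (hanti.intervalIntegrable.mul_continuousOn hweight.continuousOn)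
    ((hweight.const_mul _).intervalIntegrable _ _), sub_add_cancel]

theorem abs_affine_le_one {τ : ℝ} (hτ : τ ∈ Icc (0 : ℝ) 1) (hx : x ∈ Icc (0 : ℝ) 1) :
    |-1 + 2 * x * τ| ≤ 1 := by
  have hxτ := unitInterval.mul_mem hx hτ
  rw [abs_le]
  constructor <;> linarith [hxτ.1, hxτ.2]

theorem abs_natCast_mul_eulerDefect_le (hn : 0 < n) (he : e ∈ Ico 0 1)
    (hx : x ∈ Icc (0 : ℝ) 1) :
    |n * eulerDefect n e x| ≤ eulerMean n e 0 - eulerMean n e 1 := by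
  have hn' : (0 : ℝ) < n := Nat.cast_pos.2 hn
  have hanti := eulerMean_antitoneOn hn' he.1 he.2
  have hgap : 0 ≤ eulerMean n e 0 - eulerMean n e 1 :=
    sub_nonneg.2 (hanti unitInterval.zero_mem unitInterval.one_mem zero_le_one)
  have hdefect : |eulerDefect n e x| ≤
      ∫ τ in (0 : ℝ)..1, (eulerMean n e 0 - eulerMean n e 1) * τ ^ n := by
    have hint : IntervalIntegrable (fun τ => (eulerMean n e 0 - eulerMean n e 1) * τ ^ n)
        volume 0 1 := Continuous.intervalIntegrable (by fun_prop) _ _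
    rw [eulerDefect, ← norm_eq_abs]
    refine intervalIntegral.norm_integral_le_of_norm_le zero_le_one (.of_forall fun τ hτ => ?_) hint
    have hτ' := Ioc_subset_Icc_self hτ
    have hτx := unitInterval.mul_mem hτ' hx
    have hdiff : |eulerMean n e (τ * x) - eulerMean n e x| ≤ eulerMean n e 0 - eulerMean n e 1 := by
      rw [abs_of_nonneg (sub_nonneg.2 (hanti hτx hx (mul_le_of_le_one_left hx.1 hτ.2)))]
      exact sub_le_sub (hanti unitInterval.zero_mem hτx hτx.1)
        (hanti hx unitInterval.one_mem hx.2)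
    have hpow : 0 ≤ τ ^ n := pow_nonneg hτ'.1 n
    rw [norm_eq_abs, abs_mul, abs_mul, abs_of_nonneg hpow]
    exact mul_le_mul hdiff (mul_le_of_le_one_right hpow (abs_affine_le_one hτ' hx))
      (by positivity) hgap
  have hpow : ∫ τ in (0 : ℝ)..1, τ ^ n = 1 / (n + 1) := by simp [integral_pow]
  rw [intervalIntegral.integral_const_mul, hpow] at hdefect
  rw [abs_mul, Nat.abs_cast]
  calc n * |eulerDefect n e x|
      ≤ n * ((eulerMean n e 0 - eulerMean n e 1) * (1 / (n + 1))) := by gcongr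
    _ = (eulerMean n e 0 - eulerMean n e 1) * (n / (n + 1)) := by ring
    _ ≤ eulerMean n e 0 - eulerMean n e 1 :=
        mul_le_of_le_one_right hgap (div_le_one_of_le₀ (by linarith) (by positivity))

theorem tendsto_natCast_mul_eulerDefect {e x : ℕ → ℝ} {c : ℝ}
    (he : Tendsto (fun n : ℕ => n * e n) atTop (𝓝 c)) (hc : 0 < c)
    (hx : ∀ᶠ n in atTop, x n ∈ Icc (0 : ℝ) 1) :
    Tendsto (fun n : ℕ => n * eulerDefect n (e n) (x n)) atTop (𝓝 0) := by
  have hgap := (tendsto_eulerMean_one he hc (.of_forall fun _ => unitInterval.zero_mem)).sub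
    (tendsto_eulerMean_one he hc (.of_forall fun _ => unitInterval.one_mem))
  rw [sub_self] at hgap
  refine squeeze_zero_norm' ?_ hgap
  filter_upwards [eventually_gt_atTop 0, eventually_mem_Ioo_half he hc, hx] with n hn hen hxn
  exact abs_natCast_mul_eulerDefect_le hn ⟨hen.1.le, by linarith [hen.2]⟩ hxn

/-- The integrand over the quadrant `u, v > 0` that represents `n ^ 2 * eulerDefect n e x`, after
the substitutions `τ = exp (-u / n)` in the defect and `t = exp (-v / n)` in Euler's integral. -/
noncomputable def defectDensity (n : ℕ) (e x : ℝ) (p : ℝ × ℝ) : ℝ :=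
  exp (-p.1) * (exp (-p.1 / n) * (-1 + 2 * x * exp (-p.1 / n)))
    * (n * (eulerKernel n e (exp (-p.1 / n) * x) p.2 - eulerKernel n e x p.2))

theorem measurable_defectDensity (n : ℕ) (e x : ℝ) : Measurable (defectDensity n e x) := by
  unfold defectDensity eulerKernel
  fun_prop

theorem eulerKernel_sub_eulerKernel {N y z v : ℝ} (hN : 0 < N) (hv : 0 < v) (hy : y ≤ 1)
    (hz : z ≤ 1) :
    eulerKernel N e z v - eulerKernel N e y v = eulerKernel N e y v *
      (((1 - z * exp (-v / N)) / (1 - y * exp (-v / N))) ^ e - 1) := by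
  have hypos := one_sub_mul_exp_neg_div_pos hN hv hy
  have hcancel := mul_div_cancel₀ ((1 - z * exp (-v / N)) ^ e) (rpow_pos_of_pos hypos e).ne'
  rw [eulerKernel, eulerKernel, div_rpow (one_sub_mul_exp_neg_div_pos hN hv hz).le hypos.le]
  linear_combination -(exp (-v) * (exp (v / N) - 1) ^ (-e)) * hcancel

theorem eulerKernel_sub_eulerKernel_le {N y z v : ℝ} (hN : 0 < N) (he : e ∈ Icc 0 1) (hv : 0 < v)
    (hy : y < 1) (hzy : z ≤ y) :
    eulerKernel N e z v - eulerKernel N e y v ≤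
      e * ((y - z) / (1 - y)) * eulerKernel N e y v := by
  have ht := exp_pos (-v / N)
  have ht1 := exp_neg_div_lt_one hN hv
  have hypos := one_sub_mul_exp_neg_div_pos hN hv hy.le
  have hquot : (1 - z * exp (-v / N)) / (1 - y * exp (-v / N))
      = 1 + (y - z) * exp (-v / N) / (1 - y * exp (-v / N)) := by
    rw [one_add_div hypos.ne']
    ring
  have hincr : (y - z) * exp (-v / N) / (1 - y * exp (-v / N)) ≤ (y - z) / (1 - y) := by
    rw [div_le_div_iff₀ hypos (sub_pos.2 hy)]
    nlinarith [mul_nonneg (sub_nonneg.2 hzy) (sub_nonneg.2 ht1.le)]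
  have hincr_nonneg : 0 ≤ (y - z) * exp (-v / N) / (1 - y * exp (-v / N)) :=
    div_nonneg (mul_nonneg (sub_nonneg.2 hzy) ht.le) hypos.le
  have hbernoulli :=
    rpow_one_add_le_one_add_mul_self ((neg_one_lt_zero.le).trans hincr_nonneg) he.1 he.2
  rw [eulerKernel_sub_eulerKernel hN hv hy.le (hzy.trans hy.le), hquot, mul_comm]
  exact mul_le_mul_of_nonneg_right (by linarith [mul_le_mul_of_nonneg_left hincr he.1])
    (eulerKernel_nonneg hN hv hy.le)

theorem mul_eulerKernel_sub_le {N u v : ℝ} (hN : 0 < N) (he : e ∈ Icc 0 1)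
    (hx : x ∈ Ico (0 : ℝ) 1) (hu : 0 < u) (hv : 0 < v) :
    N * (eulerKernel N e (exp (-u / N) * x) v - eulerKernel N e x v) ≤
      e / (1 - x) * u * eulerKernel N e x v := by
  have hτ := exp_neg_div_lt_one hN hu
  have hx1 : 0 < 1 - x := sub_pos.2 hx.2
  have hker := eulerKernel_nonneg (e := e) hN hv hx.2.le
  have he0 : 0 ≤ e := he.1
  have hgap : N * (x - exp (-u / N) * x) ≤ u := by
    have hstep : 1 - exp (-u / N) ≤ u / N := by linarith [add_one_le_exp (-u / N), neg_div N u]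
    calc N * (x - exp (-u / N) * x) = x * (N * (1 - exp (-u / N))) := by ring
      _ ≤ 1 * (N * (u / N)) := by
        gcongr
        exact hx.2.le
      _ = u := by field_simp
  calc N * (eulerKernel N e (exp (-u / N) * x) v - eulerKernel N e x v)
      ≤ N * (e * ((x - exp (-u / N) * x) / (1 - x)) * eulerKernel N e x v) := by
        gcongr
        exact eulerKernel_sub_eulerKernel_le hN he hv hx.2 (mul_le_of_le_one_left hx.1 hτ.le)
    _ = e / (1 - x) * (N * (x - exp (-u / N) * x)) * eulerKernel N e x v := by ring
    _ ≤ e / (1 - x) * u * eulerKernel N e x v := by gcongr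

theorem norm_defectDensity_le (hn : 0 < n) (he : e ∈ Icc 0 1) (hx : x ∈ Ico (0 : ℝ) 1) {u v : ℝ}
    (hu : 0 < u) (hv : 0 < v) :
    ‖defectDensity n e x (u, v)‖ ≤ e / (1 - x) * (exp (-u) * u * eulerKernel n e x v) := by
  have hn' : (0 : ℝ) < n := Nat.cast_pos.2 hn
  have hτ : exp (-u / n) ∈ Icc (0 : ℝ) 1 := ⟨(exp_pos _).le, (exp_neg_div_lt_one hn' hu).le⟩
  have hτx : exp (-u / n) * x ≤ x := mul_le_of_le_one_left hx.1 hτ.2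
  have hdiff : 0 ≤ n * (eulerKernel n e (exp (-u / n) * x) v - eulerKernel n e x v) :=
    mul_nonneg hn'.le (sub_nonneg.2
      (eulerKernel_antitoneOn hn' he.1 hv (hτx.trans hx.2.le) hx.2.le hτx))
  have hweight : ‖exp (-u) * (exp (-u / n) * (-1 + 2 * x * exp (-u / n)))‖ ≤ exp (-u) := by
    rw [norm_eq_abs, abs_mul, abs_mul, abs_exp, abs_exp]
    exact mul_le_of_le_one_right (exp_pos _).le
      (mul_le_one₀ hτ.2 (abs_nonneg _) (abs_affine_le_one hτ (Ico_subset_Icc_self hx)))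
  rw [defectDensity, norm_mul, norm_of_nonneg hdiff]
  refine (mul_le_mul hweight (mul_eulerKernel_sub_le hn' he hx hu hv) hdiff
    (exp_pos _).le).trans_eq ?_
  ring

theorem integrableOn_defectDensity (hn : 0 < n) (he : e ∈ Ico 0 1) (hx : x ∈ Ico (0 : ℝ) 1) :
    IntegrableOn (defectDensity n e x) (Ioi 0 ×ˢ Ioi 0) := by
  have hker := integrableOn_eulerKernel (Nat.cast_pos.2 hn) he.1 he.2 (Ico_subset_Icc_self hx)
  refine ((integrableOn_quadrant_mul integrableOn_exp_neg_mul_self hker).const_mul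
    (e / (1 - x))).mono' (measurable_defectDensity n e x).aestronglyMeasurable ?_
  filter_upwards [ae_restrict_mem (measurableSet_Ioi.prod measurableSet_Ioi)] with p hp
  exact norm_defectDensity_le hn (Ico_subset_Icc_self he) hx hp.1 hp.2

theorem sq_mul_eulerDefect (hn : 0 < n) (he : e ∈ Ico 0 1) (hx : x ∈ Ico (0 : ℝ) 1) :
    n ^ 2 * eulerDefect n e x = ∫ p in Ioi (0 : ℝ) ×ˢ Ioi (0 : ℝ), defectDensity n e x p := by
  have hn' : (0 : ℝ) < n := Nat.cast_pos.2 hn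
  have hint := integrableOn_defectDensity hn he hx
  rw [Measure.volume_eq_prod] at hint ⊢
  rw [setIntegral_prod _ hint, pow_two, mul_assoc, eulerDefect,
    mul_integral_zero_one_eq_integral_exp_neg_div hn', ← integral_const_mul]
  refine setIntegral_congr_fun measurableSet_Ioi fun u (hu : 0 < u) => ?_
  have hτ : exp (-u / n) ≤ 1 := (exp_neg_div_lt_one hn' hu).le
  have hτx : exp (-u / n) * x ∈ Icc (0 : ℝ) 1 :=
    ⟨mul_nonneg (exp_pos _).le hx.1, mul_le_one₀ hτ hx.1 hx.2.le⟩
  have hpow : exp (-u / n) ^ n = exp (-u) := by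
    rw [← exp_nat_mul, mul_div_cancel₀ _ hn'.ne']
  simp only [defectDensity]
  rw [integral_const_mul, integral_const_mul, integral_sub
    (integrableOn_eulerKernel hn' he.1 he.2 hτx)
    (integrableOn_eulerKernel hn' he.1 he.2 (Ico_subset_Icc_self hx)), hpow, eulerMean, eulerMean]
  ring

end EulerDefect

section DefectLimit

theorem tendsto_natCast_mul_one_sub_mul {a b : ℕ → ℝ} {s t : ℝ}
    (ha : Tendsto (fun n : ℕ => n * (1 - a n)) atTop (𝓝 s))
    (hb : Tendsto (fun n : ℕ => n * (1 - b n)) atTop (𝓝 t)) :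
    Tendsto (fun n : ℕ => n * (1 - a n * b n)) atTop (𝓝 (s + t)) := by
  have hsub := (ha.add hb).sub (ha.mul (tendsto_zero_of_natCast_mul_tendsto hb))
  rw [mul_zero, sub_zero] at hsub
  exact hsub.congr fun n => by ring

theorem tendsto_one_sub_mul_div_one_sub_mul {a b d : ℕ → ℝ} {s t r : ℝ}
    (ha : Tendsto (fun n : ℕ => n * (1 - a n)) atTop (𝓝 s))
    (hb : Tendsto (fun n : ℕ => n * (1 - b n)) atTop (𝓝 t))
    (hd : Tendsto (fun n : ℕ => n * (1 - d n)) atTop (𝓝 r)) (htr : t + r ≠ 0) :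
    Tendsto (fun n => (1 - a n * b n * d n) / (1 - b n * d n)) atTop (𝓝 (1 + s / (t + r))) := by
  rw [one_add_div htr, add_comm, ← add_assoc]
  refine ((tendsto_natCast_mul_one_sub_mul (tendsto_natCast_mul_one_sub_mul ha hb) hd).div
    (tendsto_natCast_mul_one_sub_mul hb hd) htr).congr' ?_
  filter_upwards [eventually_ne_atTop 0] with n hn
  exact mul_div_mul_left _ _ (Nat.cast_ne_zero.2 hn)

variable {e x : ℕ → ℝ} {c k : ℝ}

theorem tendsto_defectDensity (he : Tendsto (fun n : ℕ => n * e n) atTop (𝓝 c)) (hc : 0 < c)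
    (hk : 0 < k) (hx : ∀ᶠ n in atTop, x n ∈ Ioo (0 : ℝ) 1)
    (hxk : Tendsto (fun n : ℕ => n * (1 - x n)) atTop (𝓝 k)) {u v : ℝ} (hu : 0 < u) (hv : 0 < v) :
    Tendsto (fun n : ℕ => defectDensity n (e n) (x n) (u, v)) atTop
      (𝓝 (c * (exp (-u) * (exp (-v) * log (1 + u / (k + v)))))) := by
  have hτ := tendsto_exp_neg_div_natCast u
  have hx1 : Tendsto x atTop (𝓝 1) := by
    simpa using (tendsto_zero_of_natCast_mul_tendsto hxk).const_sub 1
  have hweight : Tendsto (fun n : ℕ => exp (-u) * (exp (-u / n) * (-1 + 2 * x n * exp (-u / n))))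
      atTop (𝓝 (exp (-u) * (1 * (-1 + 2 * 1 * 1)))) :=
    (hτ.mul (((hx1.const_mul 2).mul hτ).const_add (-1))).const_mul _
  have hquot := tendsto_one_sub_mul_div_one_sub_mul
    (tendsto_natCast_mul_one_sub_exp_neg_div u) hxk (tendsto_natCast_mul_one_sub_exp_neg_div v)
    (by positivity)
  have hlog := tendsto_natCast_mul_rpow_sub_one he (by positivity) hquot
  have hker := tendsto_eulerKernel he hc (hx.mono fun n hn => Ioo_subset_Icc_self hn) hv
  have hprod := hweight.mul (hker.mul hlog)
  rw [show exp (-u) * (1 * (-1 + 2 * 1 * 1)) * (exp (-v) * (c * log (1 + u / (k + v))))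
    = c * (exp (-u) * (exp (-v) * log (1 + u / (k + v)))) by ring] at hprod
  refine hprod.congr' ?_
  filter_upwards [eventually_gt_atTop 0, hx] with n hn hxn
  have hn' : (0 : ℝ) < n := Nat.cast_pos.2 hn
  have hτx : exp (-u / n) * x n ≤ 1 :=
    mul_le_one₀ (exp_neg_div_lt_one hn' hu).le hxn.1.le hxn.2.le
  simp only [defectDensity, eulerKernel_sub_eulerKernel hn' hv hxn.2.le hτx]
  ring

theorem tendsto_sq_mul_eulerDefect (he : Tendsto (fun n : ℕ => n * e n) atTop (𝓝 c)) (hc : 0 < c)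
    (hk : 0 < k) (hx : ∀ᶠ n in atTop, x n ∈ Ioo (0 : ℝ) 1)
    (hxk : Tendsto (fun n : ℕ => n * (1 - x n)) atTop (𝓝 k)) :
    Tendsto (fun n : ℕ => (n : ℝ) ^ 2 * eulerDefect n (e n) (x n)) atTop
      (𝓝 (c * ∫ σ in Ioi (0 : ℝ), exp (-k * σ) / (1 + σ) ^ 2)) := by
  have hratio : ∀ᶠ n in atTop, e n / (1 - x n) ≤ c / k + 1 := by
    filter_upwards [(he.div hxk hk.ne').eventually_le_const (lt_add_one _),
      eventually_ne_atTop 0] with n hle hn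
    rwa [Pi.div_apply, mul_div_mul_left _ _ (Nat.cast_ne_zero.2 hn)] at hle
  have hmaj := (integrableOn_quadrant_mul integrableOn_exp_neg_mul_self
    integrableOn_eulerMajorant).const_mul (c / k + 1)
  have hlim : Tendsto (fun n : ℕ => ∫ p in Ioi (0 : ℝ) ×ˢ Ioi (0 : ℝ),
      defectDensity n (e n) (x n) p) atTop (𝓝 (∫ p in Ioi (0 : ℝ) ×ˢ Ioi (0 : ℝ),
        c * (exp (-p.1) * (exp (-p.2) * log (1 + p.1 / (k + p.2)))))) := by
    refine tendsto_integral_filter_of_dominated_convergence _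
      (.of_forall fun n => (measurable_defectDensity _ _ _).aestronglyMeasurable) ?_ hmaj ?_
    · filter_upwards [eventually_gt_atTop 0, eventually_mem_Ioo_half he hc, hx, hratio,
        eventually_eulerKernel_le_eulerMajorant he hc] with n hn hen hxn hrn hle
      filter_upwards [ae_restrict_mem (measurableSet_Ioi.prod measurableSet_Ioi)]
        with ⟨u, v⟩ ⟨(hu : 0 < u), (hv : 0 < v)⟩
      refine (norm_defectDensity_le hn ⟨hen.1.le, by linarith [hen.2]⟩ ⟨hxn.1.le, hxn.2⟩ hu
        hv).trans ?_
      have hker := eulerKernel_nonneg (e := e n) (Nat.cast_pos.2 hn) hv hxn.2.le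
      have hle' := hle _ (Ioo_subset_Icc_self hxn) v hv
      gcongr
    · filter_upwards [ae_restrict_mem (measurableSet_Ioi.prod measurableSet_Ioi)] with p hp
      exact tendsto_defectDensity he hc hk hx hxk hp.1 hp.2
  rw [integral_const_mul, integral_exp_neg_mul_log_quadrant hk] at hlim
  refine hlim.congr' ?_
  filter_upwards [eventually_gt_atTop 0, eventually_mem_Ioo_half he hc, hx] with n hn hen hxn
  exact (sq_mul_eulerDefect hn ⟨hen.1.le, by linarith [hen.2]⟩ ⟨hxn.1.le, hxn.2⟩).symm

end DefectLimit

section RootExpansion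

theorem tendsto_natCast_mul_div_natCast_add (a b : ℝ) :
    Tendsto (fun n : ℕ => n * (a / (n + b))) atTop (𝓝 a) := by
  have hlim := (tendsto_natCast_div_add_atTop b).const_mul a
  rw [mul_one] at hlim
  exact hlim.congr fun n => by ring

theorem tendsto_natCast_mul_mul_div_natCast_add_sub (a b : ℝ) :
    Tendsto (fun n : ℕ => n * (n * (a / (n + b)) - a)) atTop (𝓝 (-b * a)) := by
  refine ((tendsto_natCast_mul_div_natCast_add a b).const_mul (-b)).congr' ?_
  filter_upwards [tendsto_natCast_atTop_atTop.eventually_gt_atTop (-b)] with n hn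
  have hnb : (n : ℝ) + b ≠ 0 := by linarith
  field_simp
  ring

variable {x δ : ℕ → ℝ} {k L : ℝ}

theorem tendsto_natCast_mul_one_sub_of_root
    (hroot : ∀ᶠ n : ℕ in atTop, (1 - x n) * (1 + ((k + 1) / (n + 1) - 2 / (n + 2)))
      = (k + 2) / (n + 1) - 2 / (n + 2) - δ n)
    (hδ : Tendsto (fun n : ℕ => n * δ n) atTop (𝓝 0)) :
    Tendsto (fun n : ℕ => n * (1 - x n)) atTop (𝓝 k) := by
  have hcoef : Tendsto (fun n : ℕ => 1 + ((k + 1) / (n + 1) - 2 / (n + 2))) atTop (𝓝 1) := by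
    have hsmall := tendsto_zero_of_natCast_mul_tendsto
      (((tendsto_natCast_mul_div_natCast_add (k + 1) 1).sub
        (tendsto_natCast_mul_div_natCast_add 2 2)).congr fun n => (mul_sub _ _ _).symm)
    simpa using hsmall.const_add 1
  have hrhs := ((tendsto_natCast_mul_div_natCast_add (k + 2) 1).sub
    (tendsto_natCast_mul_div_natCast_add 2 2)).sub hδ
  rw [add_sub_cancel_right, sub_zero] at hrhs
  have hquot := hrhs.div hcoef one_ne_zero
  rw [div_one] at hquot
  refine hquot.congr' ?_
  filter_upwards [hroot, hcoef.eventually_ne one_ne_zero] with n hn hne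
  rw [Pi.div_apply, div_eq_iff hne, mul_assoc, hn]
  ring

theorem tendsto_natCast_mul_mul_one_sub_sub_of_root
    (hroot : ∀ᶠ n : ℕ in atTop, (1 - x n) * (1 + ((k + 1) / (n + 1) - 2 / (n + 2)))
      = (k + 2) / (n + 1) - 2 / (n + 2) - δ n)
    (hxk : Tendsto (fun n : ℕ => n * (1 - x n)) atTop (𝓝 k))
    (hδ : Tendsto (fun n : ℕ => (n : ℝ) ^ 2 * δ n) atTop (𝓝 L)) :
    Tendsto (fun n : ℕ => n * (n * (1 - x n) - k)) atTop (𝓝 (2 - k ^ 2 - L)) := by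
  have hcoef := (tendsto_natCast_mul_div_natCast_add (k + 1) 1).sub
    (tendsto_natCast_mul_div_natCast_add 2 2)
  have hlim := (((tendsto_natCast_mul_mul_div_natCast_add_sub (k + 2) 1).sub
    (tendsto_natCast_mul_mul_div_natCast_add_sub 2 2)).sub hδ).sub (hxk.mul hcoef)
  rw [show -1 * (k + 2) - -2 * 2 - L - k * (k + 1 - 2) = 2 - k ^ 2 - L by ring] at hlim
  refine hlim.congr' ?_
  filter_upwards [hroot] with n hn
  linear_combination -(n : ℝ) ^ 2 * hn

theorem isLittleO_of_tendsto_natCast_mul_mul_one_sub_sub {c : ℝ}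
    (h : Tendsto (fun n : ℕ => n * (n * (1 - x n) - k)) atTop (𝓝 (-c))) :
    (fun n : ℕ => x n - (1 - k / n + c / (n : ℝ) ^ 2)) =o[atTop]
      fun n : ℕ => 1 / (n : ℝ) ^ 2 := by
  have hne : ∀ᶠ n : ℕ in atTop, (n : ℝ) ≠ 0 := tendsto_natCast_atTop_atTop.eventually_ne_atTop 0
  rw [isLittleO_iff_tendsto' (hne.mono fun n hn h0 => absurd h0 (by positivity))]
  have hlim := (h.add_const c).neg
  rw [neg_add_cancel, neg_zero] at hlim
  refine hlim.congr' ?_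
  filter_upwards [hne] with n hn
  field_simp
  ring

end RootExpansion

section DispersionFunction

variable {A B : ℝ} {n : ℕ} {x : ℝ}

theorem exists_zetaDisp_eq_mul (hA : A ≠ 0) (hn : 1 < n) (hx : x ∈ Icc (0 : ℝ) 1) :
    ∃ C : ℝ, 0 < C ∧ zetaDisp A B n x = C *
      (eulerMean n (-aCoef n) x
          * (1 - x - (kap A B + 1) / (n + 1) * x + (2 * x / (n + 2) - 1 / (n + 1)))
        + eulerDefect n (-aCoef n) x) := by
  have hn' : (1 : ℝ) < n := Nat.one_lt_cast.2 hn
  obtain ⟨C, hC, hF⟩ := exists_Fhyp_eq_mul_eulerMean hn'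
  have hcoef : (A + 2 * B) / (A * ((n : ℝ) + 1)) = -((kap A B + 1) / (n + 1)) := by
    rw [kap]
    field_simp
    ring
  have he : -aCoef n ∈ Ico (0 : ℝ) 1 :=
    ⟨neg_nonneg.2 (aCoef_neg n).le, neg_lt.1 (neg_one_lt_aCoef hn')⟩
  refine ⟨C, hC, ?_⟩
  simp only [zetaDisp, hF, hcoef, mul_assoc C]
  simp only [mul_assoc (eulerMean _ _ _)]
  rw [intervalIntegral.integral_const_mul, integral_eulerMean_mul (zero_lt_one.trans hn) he hx]
  ring

theorem root_equation_of_zetaDisp_eq_zero (hA : A ≠ 0) (hn : 1 < n) (hx : x ∈ Icc (0 : ℝ) 1)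
    (hmean : eulerMean n (-aCoef n) x ≠ 0) (hzero : zetaDisp A B n x = 0) :
    (1 - x) * (1 + ((kap A B + 1) / (n + 1) - 2 / (n + 2)))
      = (kap A B + 2) / (n + 1) - 2 / (n + 2)
        - eulerDefect n (-aCoef n) x / eulerMean n (-aCoef n) x := by
  obtain ⟨C, hC, hζ⟩ := exists_zetaDisp_eq_mul (B := B) hA hn hx
  have hreduced := (mul_eq_zero.1 (hζ ▸ hzero)).resolve_left hC.ne'
  rw [← eq_neg_iff_add_eq_zero, mul_comm, ← eq_div_iff hmean, neg_div] at hreduced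
  linear_combination hreduced

end DispersionFunction

theorem zetaDisp_zero_asymptotics_general (A B : ℝ) (hκ : 0 < kap A B) (xseq : ℕ → ℝ)
    (hx : ∀ᶠ n in atTop, xseq n ∈ Ioo (0 : ℝ) 1 ∧ zetaDisp A B n (xseq n) = 0) :
    (fun n : ℕ => xseq n - (1 - kap A B / n + ckap A B / (n : ℝ) ^ 2))
      =o[atTop] (fun n : ℕ => 1 / (n : ℝ) ^ 2) := by
  have hA : A ≠ 0 := fun h => by simp [kap, h] at hκ
  have hmem : ∀ᶠ n in atTop, xseq n ∈ Ioo (0 : ℝ) 1 := hx.mono fun n hn => hn.1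
  have hmem' : ∀ᶠ n in atTop, xseq n ∈ Icc (0 : ℝ) 1 := hmem.mono fun n hn => Ioo_subset_Icc_self hn
  have he := tendsto_natCast_mul_neg_aCoef
  have hmean := tendsto_eulerMean_one he two_pos hmem'
  have hcoarse := (tendsto_natCast_mul_eulerDefect he two_pos hmem').div hmean one_ne_zero
  have hroot : ∀ᶠ n : ℕ in atTop,
      (1 - xseq n) * (1 + ((kap A B + 1) / (n + 1) - 2 / (n + 2)))
        = (kap A B + 2) / (n + 1) - 2 / (n + 2)
          - eulerDefect n (-aCoef n) (xseq n) / eulerMean n (-aCoef n) (xseq n) := by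
    filter_upwards [hx, hmem', eventually_gt_atTop 1, hmean.eventually_ne one_ne_zero]
      with n hxn hmemn hn hne
    exact root_equation_of_zetaDisp_eq_zero hA hn hmemn hne hxn.2
  have hfirst : Tendsto (fun n : ℕ => n * (1 - xseq n)) atTop (𝓝 (kap A B)) :=
    tendsto_natCast_mul_one_sub_of_root hroot (by simpa [Pi.div_def, mul_div_assoc] using hcoarse)
  have hfine := (tendsto_sq_mul_eulerDefect he two_pos hκ hmem hfirst).div hmean one_ne_zero
  simp only [div_one, Pi.div_def, mul_div_assoc] at hfine
  have hsecond := tendsto_natCast_mul_mul_one_sub_sub_of_root hroot hfirst hfine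
  refine isLittleO_of_tendsto_natCast_mul_mul_one_sub_sub ?_
  convert hsecond using 2
  rw [ckap]
  ring

/-- second-order asymptotic expansion of the unique zeros `x_n ∈ (0,1)` of the
dispersion functions `ζ_n`: `x_n = 1 - κ/n + c_κ/n² + o(1/n²)`. -/
theorem zetaDisp_zero_asymptotics (A B : ℝ) (hA : 0 < A) (hAB : A + B < 0)
    (xseq : ℕ → ℝ) (n₀ : ℕ)
    (hx : ∀ n : ℕ, n₀ ≤ n →
      xseq n ∈ Ioo (0:ℝ) 1 ∧ zetaDisp A B n (xseq n) = 0 ∧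
      ∀ y ∈ Ioo (0:ℝ) 1, zetaDisp A B n y = 0 → y = xseq n) :
    (fun n : ℕ => xseq n - (1 - kap A B / n + ckap A B / (n : ℝ) ^ 2))
      =o[atTop] (fun n : ℕ => 1 / (n : ℝ) ^ 2) :=
  zetaDisp_zero_asymptotics_general A B (div_pos (by linarith) hA) xseq
    (eventually_atTop.2 ⟨n₀, fun n hn => ⟨(hx n hn).1, (hx n hn).2.1⟩⟩)
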